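/- Let s < T, let X₁,…,X_m : ℝ^d → ℝ^d be C^∞ vector fields with vanishing Euclidean divergence, and let β : [s,T]×ℝ^d → ℝ^m be continuous, continuously differentiable in the space variable, with M := sup_{[s,T]×ℝ^d} |β| < ∞. Suppose ρ : [s,T]×ℝ^d → ℝ is continuous, continuously differentiable in t and twice continuously differentiable in y on (s,T]×ℝ^d, there is a compact set K ⊂ ℝ^d such that ρ(t,·) is supported in K for every t, ρ solves ∂_tρ(t,y) = Δ_Gρ(t,·)(y) + div_G(β(t,·)ρ(t,·))(y) on (s,T]×ℝ^d, and moreover ρ ≥ 0 with ∫_{ℝ^d} ρ(t,y)dy = 1 for every t ∈ [s,T]. Then for every f ∈ C²(ℝ^d) with A := sup_{y} |Δ_G f(y)| < ∞ and B := sup_{y} |∇_G f(y)| < ∞ (Euclidean norm on ℝ^m), and every t₁, t₂ ∈ [s,T] with t₁ ≤ t₂: |∫_{ℝ^d} f(y)(ρ(t₂,y) − ρ(t₁,y)) dy| ≤ (A + M·B)·(t₂ − t₁). -/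

import Mathlib

/-!
Test the equation against `f`. A divergence-free field `V` is skew-adjoint, `∫ g (V h) = -∫ h (V g)`
as soon as `g h` has compact support, so all space derivatives move onto `f`: at interior times
`d/dt ∫ f ρ(t,·) = ∫ ρ(t,·) (Δ_G f - ⟨β(t,·), ∇_G f⟩)`, which is at most `A + M B` because
`ρ(t,·)` is a probability density. As `t ↦ ∫ f ρ(t,·)` is continuous up to the endpoints of
`[s, T]`, the mean value theorem concludes without any regularity of `∂ₜρ` at `t = s`.
-/

open MeasureTheory Set

/-- Directional derivative of `f` along the vector field `V` at `x`. -/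
noncomputable def dirDeriv {d : ℕ} (V : (Fin d → ℝ) → (Fin d → ℝ))
    (f : (Fin d → ℝ) → ℝ) (x : Fin d → ℝ) : ℝ :=
  fderiv ℝ f x (V x)

/-- Euclidean divergence of a vector field on `ℝ^d`. -/
noncomputable def divE {d : ℕ} (V : (Fin d → ℝ) → (Fin d → ℝ)) (x : Fin d → ℝ) : ℝ :=
  ∑ k, fderiv ℝ (fun y => V y k) x (Pi.single k 1)

/-- Horizontal Laplacian `Δ_G f = Σᵢ Xᵢ(Xᵢ f)`. -/
noncomputable def deltaG {d m : ℕ} (X : Fin m → (Fin d → ℝ) → (Fin d → ℝ))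
    (f : (Fin d → ℝ) → ℝ) (x : Fin d → ℝ) : ℝ :=
  ∑ i, dirDeriv (X i) (dirDeriv (X i) f) x

/-- Horizontal divergence `div_G v = Σᵢ Xᵢ vᵢ`. -/
noncomputable def divG {d m : ℕ} (X : Fin m → (Fin d → ℝ) → (Fin d → ℝ))
    (v : (Fin d → ℝ) → Fin m → ℝ) (x : Fin d → ℝ) : ℝ :=
  ∑ i, dirDeriv (X i) (fun y => v y i) x

/-- Euclidean norm on `ℝ^m`. -/
noncomputable def euclNorm {m : ℕ} (v : Fin m → ℝ) : ℝ :=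
  Real.sqrt (∑ i, v i ^ 2)

section Calculus

open Filter Topology

lemma hasDerivAt_integral_of_compact_support {𝕜 α E : Type*} [RCLike 𝕜]
    [TopologicalSpace α] [T2Space α] [MeasurableSpace α] [OpensMeasurableSpace α]
    {μ : Measure α} [IsFiniteMeasureOnCompacts μ]
    [NormedAddCommGroup E] [NormedSpace ℝ E] [NormedSpace 𝕜 E]
    {U : Set 𝕜} (hU : IsOpen U) {K : Set α} (hK : IsCompact K) {G G' : 𝕜 → α → E}
    (hG : ∀ t ∈ U, Continuous (G t)) (hG' : ContinuousOn G'.uncurry (U ×ˢ univ))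
    (hsupp : ∀ t ∈ U, ∀ y ∉ K, G t y = 0)
    (hderiv : ∀ t ∈ U, ∀ y, HasDerivAt (G · y) (G' t y) t) {t : 𝕜} (ht : t ∈ U) :
    HasDerivAt (fun τ => ∫ y, G τ y ∂μ) (∫ y, G' t y ∂μ) t := by
  have hG'_off : ∀ τ ∈ U, ∀ y ∉ K, G' τ y = 0 := fun τ hτ y hy => by
    have hzero : (G · y) =ᶠ[𝓝 τ] fun _ => 0 := by
      filter_upwards [hU.mem_nhds hτ] with σ hσ using hsupp σ hσ y hy
    exact (hderiv τ hτ y).unique ((hasDerivAt_const τ 0).congr_of_eventuallyEq hzero)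
  have hG_int : ∀ τ ∈ U, Integrable (G τ) μ := fun τ hτ =>
    (hG τ hτ).integrable_of_hasCompactSupport (.intro hK (hsupp τ hτ))
  have hG't_int : Integrable (G' t) μ := by
    have hcont : Continuous (G' t) :=
      hG'.comp_continuous (f := fun y => (t, y)) (by fun_prop) fun y => ⟨ht, mem_univ y⟩
    exact hcont.integrable_of_hasCompactSupport (.intro hK (hG'_off t ht))
  obtain ⟨N, hNt, hNU, hN⟩ := local_compact_nhds (hU.mem_nhds ht)
  obtain ⟨C, hC⟩ := (hN.prod hK).exists_bound_of_continuousOn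
    (hG'.mono (prod_mono hNU (subset_univ K)))
  have hbound : ∀ y, ∀ τ ∈ N, ‖G' τ y‖ ≤ K.indicator (fun _ => C) y := fun y τ hτ => by
    by_cases hy : y ∈ K
    · rw [indicator_of_mem hy]
      exact hC (τ, y) ⟨hτ, hy⟩
    · rw [indicator_of_notMem hy, hG'_off τ (hNU hτ) y hy, norm_zero]
  have hbound_int : Integrable (K.indicator fun _ => C) μ :=
    (integrable_indicator_iff hK.measurableSet).2 (integrableOn_const hK.measure_lt_top.ne)
  exact (hasDerivAt_integral_of_dominated_loc_of_deriv_le hNt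
    (eventually_of_mem (hU.mem_nhds ht) fun τ hτ => (hG_int τ hτ).aestronglyMeasurable)
    (hG_int t ht) hG't_int.aestronglyMeasurable (.of_forall hbound) hbound_int
    (.of_forall fun y τ hτ => hderiv τ (hNU hτ) y)).2

lemma abs_image_sub_le_mul_sub_of_abs_hasDerivAt_le {D : Set ℝ} (hD : Convex ℝ D)
    {g g' : ℝ → ℝ} {C : ℝ} (hg : ContinuousOn g D)
    (hg' : ∀ t ∈ interior D, HasDerivAt g (g' t) t) (hC : ∀ t ∈ interior D, |g' t| ≤ C)
    {a b : ℝ} (ha : a ∈ D) (hb : b ∈ D) (hab : a ≤ b) : |g b - g a| ≤ C * (b - a) := by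
  have hdiff : DifferentiableOn ℝ g (interior D) := fun t ht =>
    (hg' t ht).differentiableAt.differentiableWithinAt
  have hderiv : ∀ t ∈ interior D, |deriv g t| ≤ C := fun t ht => (hg' t ht).deriv ▸ hC t ht
  have hlower := hD.mul_sub_le_image_sub_of_le_deriv hg hdiff
    (fun t ht => (abs_le.1 (hderiv t ht)).1) a ha b hb hab
  have hupper := hD.image_sub_le_mul_sub_of_deriv_le hg hdiff
    (fun t ht => (abs_le.1 (hderiv t ht)).2) a ha b hb hab
  exact abs_le.2 ⟨by linarith, hupper⟩

lemma abs_integral_mul_le_integral_abs_mul {α : Type*} [MeasurableSpace α] {μ : Measure α}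
    {r φ : α → ℝ} {C : ℝ} (hr : Integrable r μ) (hφ : ∀ y, |φ y| ≤ C) :
    |∫ y, r y * φ y ∂μ| ≤ (∫ y, |r y| ∂μ) * C := by
  rw [← integral_mul_const]
  refine norm_integral_le_of_norm_le (f := fun y => r y * φ y) (hr.abs.mul_const C)
    (.of_forall fun y => ?_)
  rw [norm_mul]
  exact mul_le_mul_of_nonneg_left (hφ y) (abs_nonneg (r y))

lemma hasCompactSupport_apply {α ι E : Type*} [TopologicalSpace α] [Zero E] {v : α → ι → E}
    (hv : HasCompactSupport v) (i : ι) : HasCompactSupport fun x => v x i :=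
  hv.comp_left (g := fun w : ι → E => w i) rfl

end Calculus

section EuclNorm

variable {m : ℕ}

lemma euclNorm_nonneg (v : Fin m → ℝ) : 0 ≤ euclNorm v := Real.sqrt_nonneg _

lemma abs_dotProduct_le_euclNorm_mul_euclNorm (v w : Fin m → ℝ) :
    |v ⬝ᵥ w| ≤ euclNorm v * euclNorm w := by
  rw [euclNorm, euclNorm, ← Real.sqrt_mul (Finset.sum_nonneg fun i _ => sq_nonneg (v i))]
  exact Real.abs_le_sqrt (Finset.sum_mul_sq_le_sq_mul_sq _ v w)

end EuclNorm

section DirDeriv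

variable {d : ℕ} {V : (Fin d → ℝ) → (Fin d → ℝ)} {u g h : (Fin d → ℝ) → ℝ}

lemma contDiff_dirDeriv {n k : WithTop ℕ∞} (hV : ContDiff ℝ n V) (hu : ContDiff ℝ k u)
    (hk : n + 1 ≤ k) : ContDiff ℝ n (dirDeriv V u) :=
  (hu.fderiv_right hk).clm_apply hV

lemma continuous_dirDeriv (hV : Continuous V) (hu : ContDiff ℝ 1 u) :
    Continuous (dirDeriv V u) :=
  (hu.continuous_fderiv one_ne_zero).clm_apply hV

lemma dirDeriv_mul {x : Fin d → ℝ} (hg : DifferentiableAt ℝ g x)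
    (hh : DifferentiableAt ℝ h x) :
    dirDeriv V (fun y => g y * h y) x = h x * dirDeriv V g x + g x * dirDeriv V h x := by
  simp only [dirDeriv, fderiv_fun_mul hg hh, add_apply,
    smul_apply, smul_eq_mul, add_comm]

lemma dirDeriv_eq_zero_of_notMem_tsupport {x : Fin d → ℝ} (hx : x ∉ tsupport u) :
    dirDeriv V u x = 0 := by
  rw [dirDeriv, fderiv_of_notMem_tsupport ℝ hx, zero_apply]

lemma dirDeriv_eq_sum_mul_fderiv_single (x : Fin d → ℝ) :
    dirDeriv V u x = ∑ k, V x k * fderiv ℝ u x (Pi.single k 1) := by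
  conv_lhs => rw [dirDeriv, pi_eq_sum_univ' (V x)]
  simp only [map_sum, map_smul, smul_eq_mul]

lemma divE_smul {x : Fin d → ℝ} (hu : DifferentiableAt ℝ u x) (hV : DifferentiableAt ℝ V x) :
    divE (fun y => u y • V y) x = dirDeriv V u x + u x * divE V x := by
  have hVk : ∀ k, DifferentiableAt ℝ (fun y => V y k) x := differentiableAt_pi.1 hV
  simp only [divE, Pi.smul_apply, smul_eq_mul, fderiv_fun_mul hu (hVk _),
    add_apply, smul_apply, Finset.sum_add_distrib,
    ← Finset.mul_sum, dirDeriv_eq_sum_mul_fderiv_single, add_comm]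

lemma integral_divE_eq_zero (hV : ContDiff ℝ 1 V) (hc : HasCompactSupport V) :
    ∫ x, divE V x = 0 := by
  have hVk : ∀ k, ContDiff ℝ 1 (fun x => V x k) := contDiff_pi.1 hV
  have hck : ∀ k, HasCompactSupport fun x => V x k := hasCompactSupport_apply hc
  have hint : ∀ k, Integrable fun x => fderiv ℝ (fun y => V y k) x (Pi.single k 1) := fun k =>
    (continuous_dirDeriv continuous_const (hVk k)).integrable_of_hasCompactSupport
      ((hck k).fderiv_apply ℝ _)
  have hzero : ∀ k, ∫ x, fderiv ℝ (fun y => V y k) x (Pi.single k 1) = 0 := fun k => by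
    have hVk_int : Integrable fun x => V x k :=
      (hVk k).continuous.integrable_of_hasCompactSupport (hck k)
    simpa using integral_mul_fderiv_eq_neg_fderiv_mul_of_integrable (μ := volume)
      (f := fun _ : Fin d → ℝ => (1 : ℝ)) (g := fun x => V x k) (v := Pi.single k 1)
      (by simp) (by simpa using hint k) (by simpa using hVk_int)
      (fun x _ => differentiableAt_const 1) (fun x _ => (hVk k).differentiable one_ne_zero x)
  simp only [divE, integral_finsetSum _ fun k _ => hint k, hzero, Finset.sum_const_zero]

lemma integral_dirDeriv_eq_zero (hV : ContDiff ℝ 1 V) (hdiv : ∀ x, divE V x = 0)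
    (hu : ContDiff ℝ 1 u) (hc : HasCompactSupport u) : ∫ x, dirDeriv V u x = 0 := by
  have hdirDeriv : ∀ x, dirDeriv V u x = divE (fun y => u y • V y) x := fun x => by
    rw [divE_smul (hu.differentiable one_ne_zero x) (hV.differentiable one_ne_zero x), hdiv,
      mul_zero, add_zero]
  simp_rw [hdirDeriv]
  exact integral_divE_eq_zero (hu.smul hV) hc.smul_right

end DirDeriv

section Horizontal

variable {d m : ℕ} {X : Fin m → (Fin d → ℝ) → (Fin d → ℝ)}
  {v b : (Fin d → ℝ) → Fin m → ℝ} {f g h r : (Fin d → ℝ) → ℝ}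

/-- Horizontal gradient `∇_G f = (X₁ f, …, X_m f)`. -/
noncomputable def gradG (X : Fin m → (Fin d → ℝ) → (Fin d → ℝ)) (f : (Fin d → ℝ) → ℝ)
    (x : Fin d → ℝ) : Fin m → ℝ :=
  fun i => dirDeriv (X i) f x

/-- The Fokker-Planck operator `r ↦ Δ_G r + div_G (b r)` with drift `b`, the right-hand side of
the evolution equation at a fixed time. -/
noncomputable def fokkerPlanck (X : Fin m → (Fin d → ℝ) → (Fin d → ℝ))
    (b : (Fin d → ℝ) → Fin m → ℝ) (r : (Fin d → ℝ) → ℝ) (x : Fin d → ℝ) : ℝ :=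
  deltaG X r x + divG X (fun y i => b y i * r y) x

/-- The backward Kolmogorov operator `f ↦ Δ_G f - ⟨b, ∇_G f⟩`, the formal `L²`-adjoint of
`fokkerPlanck X b` when the fields `X i` are divergence free. -/
noncomputable def kolmogorov (X : Fin m → (Fin d → ℝ) → (Fin d → ℝ))
    (b : (Fin d → ℝ) → Fin m → ℝ) (f : (Fin d → ℝ) → ℝ) (x : Fin d → ℝ) : ℝ :=
  deltaG X f x - b x ⬝ᵥ gradG X f x

lemma contDiff_gradG {n k : WithTop ℕ∞} (hX : ∀ i, ContDiff ℝ n (X i)) (hf : ContDiff ℝ k f)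
    (hk : n + 1 ≤ k) : ContDiff ℝ n (gradG X f) :=
  contDiff_pi.2 fun i => contDiff_dirDeriv (hX i) hf hk

lemma hasCompactSupport_gradG (hf : HasCompactSupport f) : HasCompactSupport (gradG X f) :=
  .intro hf fun _ hx => funext fun _ => dirDeriv_eq_zero_of_notMem_tsupport hx

lemma continuous_divG (hX : ∀ i, Continuous (X i)) (hv : ContDiff ℝ 1 v) :
    Continuous (divG X v) :=
  continuous_finsetSum _ fun i _ => continuous_dirDeriv (hX i) (contDiff_pi.1 hv i)

lemma divG_eq_zero_of_notMem_tsupport {x : Fin d → ℝ} (hx : x ∉ tsupport v) :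
    divG X v x = 0 :=
  Finset.sum_eq_zero fun i _ => dirDeriv_eq_zero_of_notMem_tsupport fun hxi =>
    hx (tsupport_comp_subset (g := fun w : Fin m → ℝ => w i) rfl v hxi)

lemma divG_smul {x : Fin d → ℝ} (hg : DifferentiableAt ℝ g x) (hv : DifferentiableAt ℝ v x) :
    divG X (fun y => g y • v y) x = v x ⬝ᵥ gradG X g x + g x * divG X v x := by
  have hvi : ∀ i, DifferentiableAt ℝ (fun y => v y i) x := differentiableAt_pi.1 hv
  simp only [divG, Pi.smul_apply, smul_eq_mul, dirDeriv_mul hg (hvi _), Finset.sum_add_distrib,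
    ← Finset.mul_sum, dotProduct, gradG]

lemma hasCompactSupport_mul_divG (hg : Continuous g)
    (hc : HasCompactSupport fun x => g x • v x) :
    HasCompactSupport fun x => g x * divG X v x := by
  refine .intro hc fun x hx => ?_
  by_cases hgx : g x = 0
  · rw [hgx, zero_mul]
  · have hvx : v =ᶠ[nhds x] 0 := by
      filter_upwards [hg.continuousAt.eventually_ne hgx, notMem_tsupport_iff_eventuallyEq.1 hx]
        with y hgy hgvy using (smul_eq_zero.1 hgvy).resolve_left hgy
    rw [divG_eq_zero_of_notMem_tsupport (notMem_tsupport_iff_eventuallyEq.2 hvx), mul_zero]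

lemma integral_divG_eq_zero (hX : ∀ i, ContDiff ℝ 1 (X i)) (hXdiv : ∀ i x, divE (X i) x = 0)
    (hv : ContDiff ℝ 1 v) (hc : HasCompactSupport v) : ∫ x, divG X v x = 0 := by
  have hvi : ∀ i, ContDiff ℝ 1 fun x => v x i := contDiff_pi.1 hv
  have hci : ∀ i, HasCompactSupport fun x => v x i := hasCompactSupport_apply hc
  have hint : ∀ i, Integrable (dirDeriv (X i) fun x => v x i) := fun i =>
    (continuous_dirDeriv (hX i).continuous (hvi i)).integrable_of_hasCompactSupport
      (.intro (hci i) fun _ hx => dirDeriv_eq_zero_of_notMem_tsupport hx)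
  simp only [divG, integral_finsetSum _ fun i _ => hint i,
    integral_dirDeriv_eq_zero (hX _) (hXdiv _) (hvi _) (hci _), Finset.sum_const_zero]

lemma integrable_mul_divG (hX : ∀ i, Continuous (X i)) (hg : Continuous g)
    (hv : ContDiff ℝ 1 v) (hc : HasCompactSupport fun x => g x • v x) :
    Integrable fun x => g x * divG X v x :=
  (hg.mul (continuous_divG hX hv)).integrable_of_hasCompactSupport
    (hasCompactSupport_mul_divG hg hc)

lemma integral_mul_divG (hX : ∀ i, ContDiff ℝ 1 (X i)) (hXdiv : ∀ i x, divE (X i) x = 0)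
    (hg : ContDiff ℝ 1 g) (hv : ContDiff ℝ 1 v) (hc : HasCompactSupport fun x => g x • v x) :
    ∫ x, g x * divG X v x = -∫ x, v x ⬝ᵥ gradG X g x := by
  have hgv : ContDiff ℝ 1 fun x => g x • v x := hg.smul hv
  have hX0 : ∀ i, Continuous (X i) := fun i => (hX i).continuous
  have hint : Integrable (divG X fun x => g x • v x) := by
    simpa only [one_mul] using integrable_mul_divG (g := fun _ => 1) hX0 continuous_const hgv
      (by simpa only [one_smul] using hc)
  have hprod : ∀ x, v x ⬝ᵥ gradG X g x = divG X (fun y => g y • v y) x - g x * divG X v x :=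
    fun x => eq_sub_of_add_eq
      (divG_smul (hg.differentiable one_ne_zero x) (hv.differentiable one_ne_zero x)).symm
  simp_rw [hprod]
  rw [integral_sub hint (integrable_mul_divG hX0 hg.continuous hv hc),
    integral_divG_eq_zero hX hXdiv hgv hc, zero_sub, neg_neg]

lemma integral_mul_deltaG (hX : ∀ i, ContDiff ℝ 1 (X i)) (hXdiv : ∀ i x, divE (X i) x = 0)
    (hg : ContDiff ℝ 2 g) (hh : ContDiff ℝ 2 h) (hc : HasCompactSupport h) :
    ∫ x, g x * deltaG X h x = ∫ x, h x * deltaG X g x := by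
  have hg1 : ContDiff ℝ 1 g := hg.of_le one_le_two
  have hh1 : ContDiff ℝ 1 h := hh.of_le one_le_two
  have hgradg : ContDiff ℝ 1 (gradG X g) := contDiff_gradG hX hg one_add_one_eq_two.le
  have hgradh : ContDiff ℝ 1 (gradG X h) := contDiff_gradG hX hh one_add_one_eq_two.le
  have hcg : HasCompactSupport fun x => g x • gradG X h x :=
    (hasCompactSupport_gradG hc).smul_left (f := g)
  have hch : HasCompactSupport fun x => h x • gradG X g x := hc.smul_right (f' := gradG X g)
  calc ∫ x, g x * deltaG X h x
      = -∫ x, gradG X h x ⬝ᵥ gradG X g x :=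
        integral_mul_divG hX hXdiv hg1 hgradh hcg
    _ = -∫ x, gradG X g x ⬝ᵥ gradG X h x := by simp_rw [dotProduct_comm]
    _ = ∫ x, h x * deltaG X g x :=
        (integral_mul_divG hX hXdiv hh1 hgradg hch).symm

lemma integral_mul_fokkerPlanck (hX : ∀ i, ContDiff ℝ 1 (X i))
    (hXdiv : ∀ i x, divE (X i) x = 0) (hb : ContDiff ℝ 1 b) (hf : ContDiff ℝ 2 f)
    (hr : ContDiff ℝ 2 r) (hc : HasCompactSupport r) :
    ∫ x, f x * fokkerPlanck X b r x = ∫ x, r x * kolmogorov X b f x := by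
  have hX0 : ∀ i, Continuous (X i) := fun i => (hX i).continuous
  have hf1 : ContDiff ℝ 1 f := hf.of_le one_le_two
  have hr1 : ContDiff ℝ 1 r := hr.of_le one_le_two
  have hgradf : ContDiff ℝ 1 (gradG X f) := contDiff_gradG hX hf one_add_one_eq_two.le
  have hgradr : ContDiff ℝ 1 (gradG X r) := contDiff_gradG hX hr one_add_one_eq_two.le
  have hrb : ContDiff ℝ 1 fun x => r x • b x := hr1.smul hb
  have hcf : HasCompactSupport fun x => f x • gradG X r x :=
    (hasCompactSupport_gradG hc).smul_left (f := f)
  have hcfrb : HasCompactSupport fun x => f x • r x • b x :=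
    (hc.smul_right (f' := b)).smul_left (f := f)
  have hcr : HasCompactSupport fun x => r x • gradG X f x := hc.smul_right (f' := gradG X f)
  have hdrift_int : Integrable fun x => r x * (b x ⬝ᵥ gradG X f x) :=
    (hr.continuous.mul (hb.continuous.dotProduct hgradf.continuous)).integrable_of_hasCompactSupport
      hc.mul_right
  have hdrift : ∫ x, f x * divG X (fun y => r y • b y) x
      = -∫ x, r x * (b x ⬝ᵥ gradG X f x) := by
    rw [integral_mul_divG hX hXdiv hf1 hrb hcfrb]
    simp_rw [smul_dotProduct, smul_eq_mul]
  have hflux : (fun y i => b y i * r y) = fun y => r y • b y :=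
    funext₂ fun y i => mul_comm (b y i) (r y)
  simp only [fokkerPlanck, kolmogorov, hflux, mul_add, mul_sub]
  calc ∫ x, f x * deltaG X r x + f x * divG X (fun y => r y • b y) x
      = (∫ x, f x * deltaG X r x) + ∫ x, f x * divG X (fun y => r y • b y) x :=
        integral_add (integrable_mul_divG hX0 hf.continuous hgradr hcf)
          (integrable_mul_divG hX0 hf.continuous hrb hcfrb)
    _ = (∫ x, r x * deltaG X f x) - ∫ x, r x * (b x ⬝ᵥ gradG X f x) := by
        rw [integral_mul_deltaG hX hXdiv hf hr hc, hdrift, sub_eq_add_neg]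
    _ = ∫ x, r x * deltaG X f x - r x * (b x ⬝ᵥ gradG X f x) :=
        (integral_sub (integrable_mul_divG hX0 hr.continuous hgradf hcr) hdrift_int).symm

lemma abs_kolmogorov_le {A M B : ℝ} {x : Fin d → ℝ} (hA : |deltaG X f x| ≤ A)
    (hM : euclNorm (b x) ≤ M) (hB : euclNorm (gradG X f x) ≤ B) :
    |kolmogorov X b f x| ≤ A + M * B :=
  calc |kolmogorov X b f x|
      ≤ |deltaG X f x| + |b x ⬝ᵥ gradG X f x| := abs_sub _ _
    _ ≤ |deltaG X f x| + euclNorm (b x) * euclNorm (gradG X f x) := by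
        gcongr; exact abs_dotProduct_le_euclNorm_mul_euclNorm _ _
    _ ≤ A + M * B := by
        have hM₀ : 0 ≤ M := (euclNorm_nonneg _).trans hM
        gcongr
        exact euclNorm_nonneg _

lemma hasDerivAt_integral_mul_of_fokkerPlanck (hX : ∀ i, ContDiff ℝ 1 (X i))
    (hXdiv : ∀ i x, divE (X i) x = 0) {U : Set ℝ} (hU : IsOpen U)
    {β : ℝ → (Fin d → ℝ) → Fin m → ℝ} {ρ : ℝ → (Fin d → ℝ) → ℝ}
    (hρC2 : ∀ t ∈ U, ContDiff ℝ 2 (ρ t))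
    (hρtC : ContinuousOn (fun p : ℝ × (Fin d → ℝ) => deriv (fun τ => ρ τ p.2) p.1) (U ×ˢ univ))
    {K : Set (Fin d → ℝ)} (hK : IsCompact K) (hsupp : ∀ t ∈ U, ∀ y ∉ K, ρ t y = 0)
    (hpde : ∀ t ∈ U, ∀ y, HasDerivAt (fun τ => ρ τ y) (fokkerPlanck X (β t) (ρ t) y) t)
    (hf : ContDiff ℝ 2 f) {t : ℝ} (ht : t ∈ U) (hβ : ContDiff ℝ 1 (β t)) :
    HasDerivAt (fun τ => ∫ y, f y * ρ τ y) (∫ y, ρ t y * kolmogorov X (β t) f y) t := by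
  have hderiv : HasDerivAt (fun τ => ∫ y, f y * ρ τ y)
      (∫ y, f y * deriv (fun τ => ρ τ y) t) t :=
    hasDerivAt_integral_of_compact_support hU hK
      (G' := fun t y => f y * deriv (fun τ => ρ τ y) t)
      (fun τ hτ => hf.continuous.mul (hρC2 τ hτ).continuous)
      ((hf.continuous.comp continuous_snd).continuousOn.mul hρtC)
      (fun τ hτ y hy => mul_eq_zero_of_right (f y) (hsupp τ hτ y hy))
      (fun τ hτ y => (hpde τ hτ y).differentiableAt.hasDerivAt.const_mul (f y)) ht
  simp_rw [(hpde t ht _).deriv] at hderiv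
  rwa [integral_mul_fokkerPlanck hX hXdiv hβ hf (hρC2 t ht) (.intro hK (hsupp t ht))]
    at hderiv

end Horizontal

theorem fokker_planck_time_lipschitz_pairing_general {d m : ℕ}
    {X : Fin m → (Fin d → ℝ) → (Fin d → ℝ)} (hX : ∀ i, ContDiff ℝ 1 (X i))
    (hXdiv : ∀ i x, divE (X i) x = 0) {s T : ℝ}
    {β : ℝ → (Fin d → ℝ) → Fin m → ℝ} (hβ : ∀ t ∈ Ioo s T, ContDiff ℝ 1 (β t))
    {M : ℝ} (hM : ∀ t ∈ Ioo s T, ∀ y, euclNorm (β t y) ≤ M)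
    {ρ : ℝ → (Fin d → ℝ) → ℝ}
    (hρcont : ContinuousOn (fun p : ℝ × (Fin d → ℝ) => ρ p.1 p.2) (Icc s T ×ˢ univ))
    (hρC2 : ∀ t ∈ Ioo s T, ContDiff ℝ 2 (ρ t))
    (hρtC : ContinuousOn (fun p : ℝ × (Fin d → ℝ) => deriv (fun τ => ρ τ p.2) p.1)
      (Ioo s T ×ˢ univ))
    {K : Set (Fin d → ℝ)} (hK : IsCompact K) (hsupp : ∀ t ∈ Icc s T, ∀ y ∉ K, ρ t y = 0)
    (hpde : ∀ t ∈ Ioo s T, ∀ y,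
      HasDerivAt (fun τ => ρ τ y) (fokkerPlanck X (β t) (ρ t) y) t)
    {L : ℝ} (hL : ∀ t ∈ Ioo s T, ∫ y, |ρ t y| ≤ L)
    {f : (Fin d → ℝ) → ℝ} (hf : ContDiff ℝ 2 f)
    {A B : ℝ} (hA : ∀ y, |deltaG X f y| ≤ A) (hB : ∀ y, euclNorm (gradG X f y) ≤ B)
    {t₁ t₂ : ℝ} (ht₁ : t₁ ∈ Icc s T) (ht₂ : t₂ ∈ Icc s T) (h₁₂ : t₁ ≤ t₂) :
    |∫ y, f y * (ρ t₂ y - ρ t₁ y)| ≤ L * (A + M * B) * (t₂ - t₁) := by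
  have hIoo : Ioo s T ⊆ Icc s T := Ioo_subset_Icc_self
  have hc : ∀ t ∈ Icc s T, HasCompactSupport (ρ t) := fun t ht => .intro hK (hsupp t ht)
  have hint : ∀ t ∈ Icc s T, Integrable fun y => f y * ρ t y := fun t ht =>
    (hf.continuous.mul (hρcont.comp_continuous (f := fun y => (t, y)) (by fun_prop)
      fun y => ⟨ht, mem_univ y⟩)).integrable_of_hasCompactSupport (hc t ht).mul_left
  have hcont : ContinuousOn (fun t => ∫ y, f y * ρ t y) (Icc s T) :=
    continuousOn_integral_of_compact_support hK
      ((hf.continuous.comp continuous_snd).continuousOn.mul hρcont)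
      fun t y ht hy => mul_eq_zero_of_right (f y) (hsupp t ht y hy)
  have hbound : ∀ t ∈ Ioo s T, |∫ y, ρ t y * kolmogorov X (β t) f y| ≤ L * (A + M * B) := by
    intro t ht
    have hkol : ∀ y, |kolmogorov X (β t) f y| ≤ A + M * B := fun y =>
      abs_kolmogorov_le (hA y) (hM t ht y) (hB y)
    have hρint : Integrable (ρ t) :=
      (hρC2 t ht).continuous.integrable_of_hasCompactSupport (hc t (hIoo ht))
    exact (abs_integral_mul_le_integral_abs_mul hρint hkol).trans
      (mul_le_mul_of_nonneg_right (hL t ht) ((abs_nonneg _).trans (hkol 0)))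
  have hderiv : ∀ t ∈ Ioo s T, HasDerivAt (fun τ => ∫ y, f y * ρ τ y)
      (∫ y, ρ t y * kolmogorov X (β t) f y) t := fun t ht =>
    hasDerivAt_integral_mul_of_fokkerPlanck hX hXdiv isOpen_Ioo hρC2 hρtC hK
      (fun τ hτ => hsupp τ (hIoo hτ)) hpde hf ht (hβ t ht)
  simp_rw [mul_sub (f _)]
  rw [integral_sub (hint t₂ ht₂) (hint t₁ ht₁)]
  rw [← interior_Icc] at hbound hderiv
  exact abs_image_sub_le_mul_sub_of_abs_hasDerivAt_le (convex_Icc s T) hcont hderiv hbound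
    ht₁ ht₂ h₁₂

/-- Time Lipschitz estimate against test functions with bounded horizontal Laplacian and
horizontal gradient, for probability solutions of the subelliptic Fokker-Planck equation. -/
theorem fokker_planck_time_lipschitz_pairing
    {d m : ℕ} (hd : 1 ≤ d) (hm : 1 ≤ m)
    (X : Fin m → (Fin d → ℝ) → (Fin d → ℝ))
    (hXsmooth : ∀ i, ContDiff ℝ (⊤ : ℕ∞) (X i))
    (hXdiv : ∀ i x, divE (X i) x = 0)
    (s T : ℝ) (hsT : s < T)
    (β : ℝ → (Fin d → ℝ) → Fin m → ℝ)
    (hβcont : ContinuousOn (fun p : ℝ × (Fin d → ℝ) => β p.1 p.2) (Icc s T ×ˢ univ))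
    (hβC1 : ∀ t ∈ Icc s T, ContDiff ℝ 1 (fun y => β t y))
    (M : ℝ)
    (hβbdd : ∀ t ∈ Icc s T, ∀ y, euclNorm (β t y) ≤ M)
    (ρ : ℝ → (Fin d → ℝ) → ℝ)
    (hρcont : ContinuousOn (fun p : ℝ × (Fin d → ℝ) => ρ p.1 p.2) (Icc s T ×ˢ univ))
    (hρC2 : ∀ t ∈ Ioc s T, ContDiff ℝ 2 (ρ t))
    (hρtC : ContinuousOn (fun p : ℝ × (Fin d → ℝ) => deriv (fun τ => ρ τ p.2) p.1)
      (Ioc s T ×ˢ univ))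
    (K : Set (Fin d → ℝ)) (hK : IsCompact K)
    (hsupp : ∀ t ∈ Icc s T, ∀ y ∉ K, ρ t y = 0)
    (hpde : ∀ t ∈ Ioc s T, ∀ y, HasDerivAt (fun τ => ρ τ y)
      (deltaG X (ρ t) y + divG X (fun z i => β t z i * ρ t z) y) t)
    (hρnonneg : ∀ t ∈ Icc s T, ∀ y, 0 ≤ ρ t y)
    (hρmass : ∀ t ∈ Icc s T, ∫ y, ρ t y = 1) :
    ∀ (f : (Fin d → ℝ) → ℝ), ContDiff ℝ 2 f →
      ∀ (A B : ℝ), (∀ y, |deltaG X f y| ≤ A) →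
        (∀ y, euclNorm (fun i => dirDeriv (X i) f y) ≤ B) →
        ∀ t₁ ∈ Icc s T, ∀ t₂ ∈ Icc s T, t₁ ≤ t₂ →
          |∫ y, f y * (ρ t₂ y - ρ t₁ y)| ≤ (A + M * B) * (t₂ - t₁) := by
  intro f hf A B hA hB t₁ ht₁ t₂ ht₂ h₁₂
  have hIoo : Ioo s T ⊆ Icc s T := Ioo_subset_Icc_self
  have hIoc : Ioo s T ⊆ Ioc s T := Ioo_subset_Ioc_self
  have hL : ∀ t ∈ Ioo s T, ∫ y, |ρ t y| ≤ 1 := fun t ht => by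
    simp only [abs_of_nonneg (hρnonneg t (hIoo ht) _), hρmass t (hIoo ht), le_refl]
  have hX : ∀ i, ContDiff ℝ 1 (X i) := fun i => (hXsmooth i).of_le (by exact_mod_cast le_top)
  simpa only [one_mul] using fokker_planck_time_lipschitz_pairing_general hX hXdiv
    (fun t ht => hβC1 t (hIoo ht)) (fun t ht => hβbdd t (hIoo ht)) hρcont
    (fun t ht => hρC2 t (hIoc ht)) (hρtC.mono (prod_mono hIoc subset_rfl)) hK hsupp
    (fun t ht => hpde t (hIoc ht)) hL hf hA hB ht₁ ht₂ h₁₂
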